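/- Let d be a natural number with d ≥ 3 and d ≠ 4, and let y₁, y₂ ∈ ℝ^d with y₁ ≠ y₂. Let U be the open set of points x ∈ ℝ^d such that x ≠ y₁ and (y₁ − y₂) + λ(x − y₁) ≠ 0 for all λ ∈ [0, 1] (in particular x ≠ y₂). Define on U the function g_loc(x) = (‖x − y₁‖^{4−d} / (2(4−d))) · ∫₀¹ ‖(y₁ − y₂) + λ(x − y₁)‖^{2−d} dλ. Then for every x ∈ U, Δ g_loc(x) = ‖x − y₁‖^{2−d} ‖x − y₂‖^{2−d}, where Δ is the Euclidean Laplacian on ℝ^d. -/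

import Mathlib

/-!
Write `n` for the dimension. Let `h` be harmonic near the segment from `y` to `x`, and let
`A x = ∫₀¹ h (y + t (x - y)) dt` be its mean along that segment. Since harmonicity survives
homotheties and integration in a parameter, `A` is harmonic. Since
`d/dt (t h (y + t (x - y))) = h (y + t (x - y)) + t Dh (y + t (x - y)) (x - y)`, integration over
`[0, 1]` gives the radial equation `A x + DA x (x - y) = h x`. In the Leibniz rule for
`Δ (‖x - y‖ ^ p A)` the term with `ΔA` vanishes, and
`Δ ‖x - y‖ ^ p = p (p + n - 2) ‖x - y‖ ^ (p - 2)`, `∇ ‖x - y‖ ^ p = p ‖x - y‖ ^ (p - 2) (x - y)`.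
The exponent `p = 4 - n` is the one for which `p (p + n - 2) = 2 p`, so that the two remaining terms
combine to `2 p ‖x - y‖ ^ (p - 2) (A x + DA x (x - y)) = 2 p ‖x - y‖ ^ (2 - n) h x`. The theorem is
the case of the Newton kernel `h x = ‖x - y₂‖ ^ (2 - n)`.
-/

open MeasureTheory Set

/-- The Euclidean Laplacian of `f : ℝ^d → ℝ`, as the sum of the second partial
derivatives along the standard coordinate directions. -/
noncomputable def laplacian {d : ℕ} (f : EuclideanSpace ℝ (Fin d) → ℝ)
    (x : EuclideanSpace ℝ (Fin d)) : ℝ :=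
  ∑ i : Fin d,
    fderiv ℝ (fun y => fderiv ℝ f y (EuclideanSpace.single i 1)) x
      (EuclideanSpace.single i 1)

open Filter Topology Function Interval Module
open scoped Laplacian Convex
open AffineMap (lineMap lineMap_apply_module lineMap_apply_module')
open InnerProductSpace (HarmonicAt HarmonicOnNhd laplacian_smul
  laplacian_eq_iteratedFDeriv_orthonormalBasis)

section JointContDiff

lemma continuousOn_of_continuousAt_uncurry {X Y Z : Type*} [TopologicalSpace X]
    [TopologicalSpace Y] [TopologicalSpace Z] {K : Set Y} {g : X → Y → Z} {x : X}
    (hg : ∀ y ∈ K, ContinuousAt (uncurry g) (x, y)) : ContinuousOn (g x) K := fun y hy ↦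
  ((hg y hy).comp (f := fun y ↦ (x, y)) (by fun_prop)).continuousWithinAt

lemma exists_eventually_forall_norm_le {X Y F : Type*} [TopologicalSpace X] [TopologicalSpace Y]
    [SeminormedAddCommGroup F] {K : Set Y} (hK : IsCompact K) {g : X → Y → F} {x : X}
    (hg : ∀ y ∈ K, ContinuousAt (uncurry g) (x, y)) :
    ∃ C, ∀ᶠ z in 𝓝 x, ∀ y ∈ K, ‖g z y‖ ≤ C := by
  obtain ⟨C, hC⟩ := hK.exists_bound_of_continuousOn (continuousOn_of_continuousAt_uncurry hg)
  refine ⟨C + 1, hK.eventually_forall_of_forall_eventually fun y hy ↦ ?_⟩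
  have hlt : ‖uncurry g (x, y)‖ < C + 1 := (hC y hy).trans_lt (lt_add_one C)
  exact ((hg y hy).norm.eventually_lt_const hlt).mono fun _ h ↦ h.le

variable {E F P : Type*} [NormedAddCommGroup E] [NormedSpace ℝ E] [NormedAddCommGroup F]
  [NormedSpace ℝ F] [NormedAddCommGroup P] [NormedSpace ℝ P]

lemma eventually_forall_contDiffAt_uncurry {n : ℕ} {f : E → P → F} {x : E} {K : Set P}
    (hK : IsCompact K) (hf : ∀ p ∈ K, ContDiffAt ℝ n (uncurry f) (x, p)) :
    ∀ᶠ z in 𝓝 x, ∀ p ∈ K, ContDiffAt ℝ n (uncurry f) (z, p) :=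
  hK.eventually_forall_of_forall_eventually fun p hp ↦ (hf p hp).eventually (by simp)

lemma contDiffAt_fderiv_uncurry {n : ℕ} {f : E → P → F} {x : E} {p : P}
    (hf : ContDiffAt ℝ (n + 1) (uncurry f) (x, p)) :
    ContDiffAt ℝ n (uncurry fun z p ↦ fderiv ℝ (f · p) z) (x, p) :=
  ContDiffAt.fderiv (f := fun (q : E × P) z ↦ f z q.2) (g := Prod.fst)
    (hf.comp ((x, p), x) (f := fun q : (E × P) × E ↦ (q.2, q.1.2)) (by fun_prop))
    contDiffAt_fst le_rfl

lemma contDiffAt_fderiv_fderiv_uncurry {n : ℕ} {f : E → P → F} {x : E} {p : P}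
    (hf : ContDiffAt ℝ (n + 2) (uncurry f) (x, p)) :
    ContDiffAt ℝ n (uncurry fun z p ↦ fderiv ℝ (fderiv ℝ (f · p)) z) (x, p) :=
  contDiffAt_fderiv_uncurry <| contDiffAt_fderiv_uncurry (n := n + 1) <| by
    simpa [add_assoc, one_add_one_eq_two] using hf

end JointContDiff

section ParametricIntervalIntegral

variable {E F : Type*} [NormedAddCommGroup E] [NormedSpace ℝ E]
  [NormedAddCommGroup F] [NormedSpace ℝ F] {f : E → ℝ → F} {x : E} {a b : ℝ}

lemma contDiffAt_zero_intervalIntegral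
    (hf : ∀ t ∈ [[a, b]], ContDiffAt ℝ 0 (uncurry f) (x, t)) :
    ContDiffAt ℝ 0 (fun z ↦ ∫ t in a..b, f z t) x := by
  suffices h : ∀ᶠ z in 𝓝 x, ContinuousAt (fun z ↦ ∫ t in a..b, f z t) z from
    contDiffAt_zero.2 ⟨_, h, fun z hz ↦ ContinuousAt.continuousWithinAt hz⟩
  filter_upwards [eventually_forall_contDiffAt_uncurry isCompact_uIcc (n := 0) hf] with z hz
  obtain ⟨C, hC⟩ :=
    exists_eventually_forall_norm_le isCompact_uIcc fun t ht ↦ (hz t ht).continuousAt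
  refine intervalIntegral.continuousAt_of_dominated_interval (bound := fun _ ↦ C)
    ?measurable ?bound intervalIntegrable_const ?continuous
  case measurable =>
    filter_upwards [eventually_forall_contDiffAt_uncurry isCompact_uIcc hz] with w hw
    have hcont : ContinuousOn (f w) [[a, b]] :=
      continuousOn_of_continuousAt_uncurry fun t ht ↦ (hw t ht).continuousAt
    exact hcont.intervalIntegrable.def'.aestronglyMeasurable
  case bound =>
    filter_upwards [hC] with w hw
    exact .of_forall fun t ht ↦ hw t (uIoc_subset_uIcc ht)
  case continuous =>
    exact .of_forall fun t ht ↦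
      (hz t (uIoc_subset_uIcc ht)).continuousAt.comp (f := fun z ↦ (z, t)) (by fun_prop)

lemma hasFDerivAt_intervalIntegral
    (hf : ∀ t ∈ [[a, b]], ContDiffAt ℝ 1 (uncurry f) (x, t)) :
    HasFDerivAt (fun z ↦ ∫ t in a..b, f z t) (∫ t in a..b, fderiv ℝ (f · t) x) x := by
  have hf_near := eventually_forall_contDiffAt_uncurry isCompact_uIcc (n := 1) hf
  have hf' : ∀ t ∈ [[a, b]], ContinuousAt (uncurry fun z t ↦ fderiv ℝ (f · t) z) (x, t) :=
    fun t ht ↦ (contDiffAt_fderiv_uncurry (n := 0) (by simpa using hf t ht)).continuousAt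
  have hcont : ContinuousOn (f x) [[a, b]] :=
    continuousOn_of_continuousAt_uncurry fun t ht ↦ (hf t ht).continuousAt
  have hcont' : ContinuousOn (fun t ↦ fderiv ℝ (f · t) x) [[a, b]] :=
    continuousOn_of_continuousAt_uncurry (g := fun z t ↦ fderiv ℝ (f · t) z) hf'
  obtain ⟨C, hC⟩ := exists_eventually_forall_norm_le isCompact_uIcc hf'
  refine intervalIntegral.hasFDerivAt_integral_of_dominated_of_fderiv_le
    (F' := fun z t ↦ fderiv ℝ (f · t) z) (bound := fun _ ↦ C) (hC.and hf_near)
    ?measurable ?integrable ?measurable' ?bound intervalIntegrable_const ?differentiable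
  case measurable =>
    filter_upwards [hf_near] with z hz
    have hcont : ContinuousOn (f z) [[a, b]] :=
      continuousOn_of_continuousAt_uncurry fun t ht ↦ (hz t ht).continuousAt
    exact hcont.intervalIntegrable.def'.aestronglyMeasurable
  case integrable => exact hcont.intervalIntegrable
  case measurable' => exact hcont'.intervalIntegrable.def'.aestronglyMeasurable
  case bound => exact .of_forall fun t ht z hz ↦ hz.1 t (uIoc_subset_uIcc ht)
  case differentiable =>
    refine .of_forall fun t ht z hz ↦ DifferentiableAt.hasFDerivAt ?_
    exact ((hz.2 t (uIoc_subset_uIcc ht)).differentiableAt one_ne_zero).comp z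
      (f := fun z ↦ (z, t)) (by fun_prop)

lemma contDiffAt_succ_intervalIntegral {n : ℕ}
    (hf : ∀ t ∈ [[a, b]], ContDiffAt ℝ (n + 1) (uncurry f) (x, t))
    (hf' : ContDiffAt ℝ n (fun z ↦ ∫ t in a..b, fderiv ℝ (f · t) z) x) :
    ContDiffAt ℝ (n + 1) (fun z ↦ ∫ t in a..b, f z t) x := by
  refine contDiffAt_succ_iff_hasFDerivAt.2 ⟨_, ⟨_, ?_, fun z hz ↦ hz⟩, hf'⟩
  have hf_near := eventually_forall_contDiffAt_uncurry isCompact_uIcc (n := n + 1)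
    (by simpa using hf)
  filter_upwards [hf_near] with z hz
  exact hasFDerivAt_intervalIntegral fun t ht ↦ (hz t ht).of_le (by norm_cast; lia)

lemma contDiffAt_one_intervalIntegral
    (hf : ∀ t ∈ [[a, b]], ContDiffAt ℝ 1 (uncurry f) (x, t)) :
    ContDiffAt ℝ 1 (fun z ↦ ∫ t in a..b, f z t) x := by
  have hf₁ : ∀ t ∈ [[a, b]], ContDiffAt ℝ ((0 : ℕ) + 1) (uncurry f) (x, t) := by simpa using hf
  simpa using contDiffAt_succ_intervalIntegral hf₁
    (contDiffAt_zero_intervalIntegral fun t ht ↦ contDiffAt_fderiv_uncurry (hf₁ t ht))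

lemma contDiffAt_two_intervalIntegral
    (hf : ∀ t ∈ [[a, b]], ContDiffAt ℝ 2 (uncurry f) (x, t)) :
    ContDiffAt ℝ 2 (fun z ↦ ∫ t in a..b, f z t) x := by
  have hf₂ : ∀ t ∈ [[a, b]], ContDiffAt ℝ ((1 : ℕ) + 1) (uncurry f) (x, t) := by
    simpa [one_add_one_eq_two] using hf
  simpa [one_add_one_eq_two] using contDiffAt_succ_intervalIntegral hf₂
    (contDiffAt_one_intervalIntegral fun t ht ↦ contDiffAt_fderiv_uncurry (hf₂ t ht))

lemma fderiv_fderiv_intervalIntegral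
    (hf : ∀ t ∈ [[a, b]], ContDiffAt ℝ 2 (uncurry f) (x, t)) :
    fderiv ℝ (fderiv ℝ fun z ↦ ∫ t in a..b, f z t) x =
      ∫ t in a..b, fderiv ℝ (fderiv ℝ (f · t)) x := by
  have hfderiv : fderiv ℝ (fun z ↦ ∫ t in a..b, f z t) =ᶠ[𝓝 x]
      fun z ↦ ∫ t in a..b, fderiv ℝ (f · t) z := by
    filter_upwards [eventually_forall_contDiffAt_uncurry isCompact_uIcc (n := 2) hf] with z hz
    exact (hasFDerivAt_intervalIntegral fun t ht ↦ (hz t ht).of_le one_le_two).fderiv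
  rw [hfderiv.fderiv_eq]
  refine (hasFDerivAt_intervalIntegral fun t ht ↦ ?_).fderiv
  exact contDiffAt_fderiv_uncurry (n := 1) (by simpa [one_add_one_eq_two] using hf t ht)

end ParametricIntervalIntegral

section Fderiv

variable {E F : Type*} [NormedAddCommGroup E] [NormedSpace ℝ E]
  [NormedAddCommGroup F] [NormedSpace ℝ F]

lemma differentiableAt_fderiv_of_contDiffAt_two {f : E → F} {x : E} (hf : ContDiffAt ℝ 2 f x) :
    DifferentiableAt ℝ (fderiv ℝ f) x :=
  (hf.fderiv_right (m := 1) (by simp [one_add_one_eq_two])).differentiableAt one_ne_zero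

lemma fderiv_comp_lineMap (h : E → F) (y z : E) (t : ℝ) :
    fderiv ℝ (fun z ↦ h (lineMap y z t)) z = t • fderiv ℝ h (lineMap y z t) := by
  simp only [lineMap_apply_module]
  rw [fderiv_comp_smul (f := fun z ↦ h ((1 - t) • y + z)), fderiv_comp_add_left]

lemma fderiv_fderiv_comp_lineMap (h : E → F) (y z : E) (t : ℝ) :
    fderiv ℝ (fderiv ℝ fun z ↦ h (lineMap y z t)) z =
      t ^ 2 • fderiv ℝ (fderiv ℝ h) (lineMap y z t) := by
  have hfderiv : (fderiv ℝ fun z ↦ h (lineMap y z t)) =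
      t • fun z ↦ fderiv ℝ h (lineMap y z t) := funext fun z ↦ fderiv_comp_lineMap h y z t
  calc fderiv ℝ (fderiv ℝ fun z ↦ h (lineMap y z t)) z
      = t • fderiv ℝ (fun z ↦ fderiv ℝ h (lineMap y z t)) z := by
        rw [hfderiv]
        exact congrFun (fderiv_const_smul_field (f := fun z ↦ fderiv ℝ h (lineMap y z t)) t) z
    _ = t ^ 2 • fderiv ℝ (fderiv ℝ h) (lineMap y z t) := by rw [fderiv_comp_lineMap, smul_smul, sq]

lemma fderiv_fderiv_smul_apply {u : E → ℝ} {v : E → F} {x : E} (hu : ContDiffAt ℝ 2 u x)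
    (hv : ContDiffAt ℝ 2 v x) (w : E) :
    fderiv ℝ (fun y ↦ fderiv ℝ (fun z ↦ u z • v z) y w) x w =
      u x • fderiv ℝ (fun y ↦ fderiv ℝ v y w) x w + 2 • fderiv ℝ u x w • fderiv ℝ v x w +
        fderiv ℝ (fun y ↦ fderiv ℝ u y w) x w • v x := by
  have hfderiv : (fun y ↦ fderiv ℝ (fun z ↦ u z • v z) y w) =ᶠ[𝓝 x]
      fun y ↦ u y • fderiv ℝ v y w + fderiv ℝ u y w • v y := by
    filter_upwards [hu.eventually (by simp), hv.eventually (by simp)] with y hu hv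
    rw [fderiv_fun_smul (hu.differentiableAt two_ne_zero) (hv.differentiableAt two_ne_zero)]
    simp
  have hu' : DifferentiableAt ℝ u x := hu.differentiableAt two_ne_zero
  have hv' : DifferentiableAt ℝ v x := hv.differentiableAt two_ne_zero
  have hDu : DifferentiableAt ℝ (fun y ↦ fderiv ℝ u y w) x :=
    (differentiableAt_fderiv_of_contDiffAt_two hu).clm_apply (differentiableAt_const _)
  have hDv : DifferentiableAt ℝ (fun y ↦ fderiv ℝ v y w) x :=
    (differentiableAt_fderiv_of_contDiffAt_two hv).clm_apply (differentiableAt_const _)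
  rw [hfderiv.fderiv_eq, fderiv_fun_add (hu'.fun_smul hDv) (hDu.fun_smul hv'),
    fderiv_fun_smul hu' hDv, fderiv_fun_smul hDu hv']
  simp only [add_apply, smul_apply, ContinuousLinearMap.smulRight_apply]
  module

end Fderiv

section Laplacian

variable {E F ι : Type*} [NormedAddCommGroup E] [InnerProductSpace ℝ E] [FiniteDimensional ℝ E]
  [NormedAddCommGroup F] [NormedSpace ℝ F] [Fintype ι] (e : OrthonormalBasis ι ℝ E)

lemma laplacian_eq_sum_fderiv_fderiv (f : E → F) (x : E) :
    Δ f x = ∑ i, fderiv ℝ (fderiv ℝ f) x (e i) (e i) := by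
  simp [laplacian_eq_iteratedFDeriv_orthonormalBasis f e, iteratedFDeriv_two_apply]

lemma laplacian_eq_sum_fderiv_fderiv_apply {f : E → F} {x : E} (hf : ContDiffAt ℝ 2 f x) :
    Δ f x = ∑ i, fderiv ℝ (fun y ↦ fderiv ℝ f y (e i)) x (e i) := by
  rw [laplacian_eq_sum_fderiv_fderiv e]
  refine Finset.sum_congr rfl fun i _ ↦ ?_
  rw [fderiv_clm_apply (differentiableAt_fderiv_of_contDiffAt_two hf) (differentiableAt_const _)]
  simp

lemma laplacian_eq_innerProductSpace_laplacian {d : ℕ} {f : EuclideanSpace ℝ (Fin d) → ℝ}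
    {x : EuclideanSpace ℝ (Fin d)} (hf : ContDiffAt ℝ 2 f x) : laplacian f x = Δ f x := by
  simp [laplacian, laplacian_eq_sum_fderiv_fderiv_apply (EuclideanSpace.basisFun (Fin d) ℝ) hf]

lemma laplacian_comp_lineMap (h : E → F) (y z : E) (t : ℝ) :
    Δ (fun z ↦ h (lineMap y z t)) z = t ^ 2 • Δ h (lineMap y z t) := by
  simp [laplacian_eq_sum_fderiv_fderiv (stdOrthonormalBasis ℝ E), fderiv_fderiv_comp_lineMap,
    Finset.smul_sum]

lemma fderiv_gradient_eq_sum (u : E → ℝ) (v : E → F) (x : E) :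
    fderiv ℝ v x (gradient u x) = ∑ i, fderiv ℝ u x (e i) • fderiv ℝ v x (e i) := by
  conv_lhs => rw [← e.sum_repr' (gradient u x)]
  simp only [map_sum, map_smul, inner_gradient_right, conj_trivial]

lemma laplacian_fun_smul {u : E → ℝ} {v : E → F} {x : E} (hu : ContDiffAt ℝ 2 u x)
    (hv : ContDiffAt ℝ 2 v x) :
    Δ (fun z ↦ u z • v z) x = u x • Δ v x + 2 • fderiv ℝ v x (gradient u x) + Δ u x • v x := by
  let e := stdOrthonormalBasis ℝ E
  rw [laplacian_eq_sum_fderiv_fderiv_apply e (hu.fun_smul hv),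
    laplacian_eq_sum_fderiv_fderiv_apply e hu, laplacian_eq_sum_fderiv_fderiv_apply e hv,
    fderiv_gradient_eq_sum e]
  simp only [fderiv_fderiv_smul_apply hu hv, Finset.sum_add_distrib, Finset.smul_sum,
    Finset.sum_smul]

lemma laplacian_intervalIntegral [CompleteSpace F] {f : E → ℝ → F} {x : E} {a b : ℝ}
    (hf : ∀ t ∈ [[a, b]], ContDiffAt ℝ 2 (uncurry f) (x, t)) :
    Δ (fun z ↦ ∫ t in a..b, f z t) x = ∫ t in a..b, Δ (f · t) x := by
  let e := stdOrthonormalBasis ℝ E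
  have hD : ContinuousOn (fun t ↦ fderiv ℝ (fderiv ℝ (f · t)) x) [[a, b]] :=
    continuousOn_of_continuousAt_uncurry (g := fun z t ↦ fderiv ℝ (fderiv ℝ (f · t)) z)
      fun t ht ↦ (contDiffAt_fderiv_fderiv_uncurry (n := 0) (by simpa using hf t ht)).continuousAt
  have hDe (i) : ContinuousOn (fun t ↦ fderiv ℝ (fderiv ℝ (f · t)) x (e i)) [[a, b]] :=
    hD.clm_apply continuousOn_const
  have hDee (i) : ContinuousOn (fun t ↦ fderiv ℝ (fderiv ℝ (f · t)) x (e i) (e i)) [[a, b]] :=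
    (hDe i).clm_apply continuousOn_const
  simp only [laplacian_eq_sum_fderiv_fderiv e, fderiv_fderiv_intervalIntegral hf]
  rw [intervalIntegral.integral_finsetSum fun i _ ↦ (hDee i).intervalIntegrable]
  refine Finset.sum_congr rfl fun i _ ↦ ?_
  rw [ContinuousLinearMap.intervalIntegral_apply hD.intervalIntegrable,
    ContinuousLinearMap.intervalIntegral_apply (hDe i).intervalIntegrable]

end Laplacian

section NormRpow

variable {E : Type*} [NormedAddCommGroup E] [InnerProductSpace ℝ E] {x y : E}

lemma contDiffAt_norm_sub_rpow {n : WithTop ℕ∞} (p : ℝ) (hx : x ≠ y) :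
    ContDiffAt ℝ n (fun z ↦ ‖z - y‖ ^ p) x :=
  ((contDiffAt_id.sub contDiffAt_const).norm ℝ (sub_ne_zero.2 hx)).rpow_const_of_ne
    (norm_ne_zero_iff.2 (sub_ne_zero.2 hx))

lemma hasFDerivAt_norm_sub_rpow (p : ℝ) (hx : x ≠ y) :
    HasFDerivAt (fun z ↦ ‖z - y‖ ^ p) ((p * ‖x - y‖ ^ (p - 2)) • innerSL ℝ (x - y)) x := by
  have hsq (r : ℝ) (z : E) : (‖z‖ ^ 2) ^ r = ‖z‖ ^ (2 * r) := by
    rw [← Real.rpow_natCast_mul (norm_nonneg z)]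
    norm_num
  have h := ((hasFDerivAt_id x).sub_const y).norm_sq.rpow_const (p := p / 2)
    (.inl (by simpa [sub_eq_zero] using hx))
  simp only [id, hsq, mul_div_cancel₀ p two_ne_zero] at h
  refine h.congr_fderiv ?_
  ext v
  simp only [mul_sub, mul_div_cancel₀ p two_ne_zero, mul_one, map_sub,
    ContinuousLinearMap.comp_id, smul_apply, sub_apply, coe_innerSL_apply, nsmul_eq_mul,
    Nat.cast_ofNat, smul_eq_mul]
  ring

lemma gradient_norm_sub_rpow [CompleteSpace E] (p : ℝ) (hx : x ≠ y) :
    gradient (fun z ↦ ‖z - y‖ ^ p) x = (p * ‖x - y‖ ^ (p - 2)) • (x - y) := by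
  refine HasGradientAt.gradient (hasGradientAt_iff_hasFDerivAt.2 ?_)
  refine (hasFDerivAt_norm_sub_rpow p hx).congr_fderiv ?_
  ext v
  simp

lemma fderiv_fderiv_norm_sub_rpow_apply (p : ℝ) (hx : x ≠ y) (v : E) :
    fderiv ℝ (fun z ↦ fderiv ℝ (fun z ↦ ‖z - y‖ ^ p) z v) x v =
      p * (p - 2) * ‖x - y‖ ^ (p - 4) * inner ℝ v (x - y) ^ 2 +
        p * ‖x - y‖ ^ (p - 2) * ‖v‖ ^ 2 := by
  have hfderiv : (fun z ↦ fderiv ℝ (fun z ↦ ‖z - y‖ ^ p) z v) =ᶠ[𝓝 x]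
      fun z ↦ p * ‖z - y‖ ^ (p - 2) * inner ℝ v (z - y) := by
    filter_upwards [eventually_ne_nhds hx] with z hz
    rw [(hasFDerivAt_norm_sub_rpow p hz).fderiv, smul_apply, innerSL_apply_apply, smul_eq_mul,
      real_inner_comm]
  have hinner : HasFDerivAt (fun z ↦ inner ℝ v (z - y)) (innerSL ℝ v) x :=
    (innerSL ℝ v).hasFDerivAt.comp x ((hasFDerivAt_id x).sub_const y)
  rw [hfderiv.fderiv_eq,
    (((hasFDerivAt_norm_sub_rpow (p - 2) hx).const_mul p).fun_mul hinner).fderiv,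
    show p - 2 - 2 = p - 4 by ring]
  simp only [add_apply, smul_apply, innerSL_apply_apply, smul_eq_mul, real_inner_self_eq_norm_sq,
    real_inner_comm v]
  ring

variable [FiniteDimensional ℝ E]

lemma laplacian_norm_sub_rpow (p : ℝ) (hx : x ≠ y) :
    Δ (fun z ↦ ‖z - y‖ ^ p) x = p * (p + finrank ℝ E - 2) * ‖x - y‖ ^ (p - 2) := by
  have hpow : ‖x - y‖ ^ (p - 4) * ‖x - y‖ ^ 2 = ‖x - y‖ ^ (p - 2) := by
    rw [← Real.rpow_add_natCast (norm_ne_zero_iff.2 (sub_ne_zero.2 hx))]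
    congr 1
    push_cast
    ring
  rw [laplacian_eq_sum_fderiv_fderiv_apply (stdOrthonormalBasis ℝ E)
    (contDiffAt_norm_sub_rpow p hx)]
  simp only [fderiv_fderiv_norm_sub_rpow_apply p hx, Finset.sum_add_distrib, ← Finset.mul_sum,
    OrthonormalBasis.sum_sq_inner_right, mul_assoc, hpow, OrthonormalBasis.norm_eq_one]
  simp only [one_pow, Finset.sum_const, Finset.card_univ, Fintype.card_fin, nsmul_eq_mul, mul_one]
  ring

lemma harmonicAt_norm_sub_rpow_two_sub_finrank (hx : x ≠ y) :
    HarmonicAt (fun z ↦ ‖z - y‖ ^ (2 - finrank ℝ E : ℝ)) x := by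
  refine ⟨contDiffAt_norm_sub_rpow _ hx, ?_⟩
  filter_upwards [eventually_ne_nhds hx] with z hz
  simp [laplacian_norm_sub_rpow _ hz]

end NormRpow

section SegmentAverage

variable {E F : Type*} [NormedAddCommGroup E] [NormedSpace ℝ E]
  [NormedAddCommGroup F] [NormedSpace ℝ F] {h : E → F} {x y : E}

/-- The mean of `h` along the segment from `y` to `x`, with respect to the affine parameter. For
`h = ‖· - y₂‖ ^ (2 - d)` and `y = y₁` it is the line integral in `g_loc`. -/
noncomputable def segmentAverage (h : E → F) (y x : E) : F :=
  ∫ t in (0 : ℝ)..1, h (lineMap y x t)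

lemma contDiffAt_uncurry_comp_lineMap {n : WithTop ℕ∞}
    (hh : ∀ z ∈ [y -[ℝ] x], ContDiffAt ℝ n h z) :
    ∀ t ∈ [[(0 : ℝ), 1]], ContDiffAt ℝ n (uncurry fun z (t : ℝ) ↦ h (lineMap y z t)) (x, t) := by
  intro t ht
  rw [uIcc_of_le zero_le_one] at ht
  refine (hh _ (lineMap_mem_segment ℝ y x ht)).comp (x, t)
    (f := fun q : E × ℝ ↦ lineMap y q.1 q.2) ?_
  simp only [lineMap_apply_module]
  fun_prop

lemma contDiffAt_segmentAverage (hh : ∀ z ∈ [y -[ℝ] x], ContDiffAt ℝ 2 h z) :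
    ContDiffAt ℝ 2 (segmentAverage h y) x :=
  contDiffAt_two_intervalIntegral (contDiffAt_uncurry_comp_lineMap hh)

lemma segmentAverage_add_fderiv [CompleteSpace F] (hh : ∀ z ∈ [y -[ℝ] x], ContDiffAt ℝ 1 h z) :
    segmentAverage h y x + fderiv ℝ (segmentAverage h y) x (x - y) = h x := by
  have hf := contDiffAt_uncurry_comp_lineMap hh
  have hcont : ContinuousOn (fun t : ℝ ↦ h (lineMap y x t)) [[0, 1]] :=
    continuousOn_of_continuousAt_uncurry (g := fun z (t : ℝ) ↦ h (lineMap y z t))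
      fun t ht ↦ (hf t ht).continuousAt
  have hcont' : ContinuousOn (fun t : ℝ ↦ fderiv ℝ (fun z ↦ h (lineMap y z t)) x) [[0, 1]] :=
    continuousOn_of_continuousAt_uncurry
      (g := fun x (t : ℝ) ↦ fderiv ℝ (fun z ↦ h (lineMap y z t)) x)
      fun t ht ↦ (contDiffAt_fderiv_uncurry (n := 0) (by simpa using hf t ht)).continuousAt
  have hcont'_apply :
      ContinuousOn (fun t : ℝ ↦ fderiv ℝ (fun z ↦ h (lineMap y z t)) x (x - y)) [[0, 1]] :=
    hcont'.clm_apply continuousOn_const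
  have hderiv : ∀ t ∈ [[(0 : ℝ), 1]], HasDerivAt (fun t : ℝ ↦ t • h (lineMap y x t))
      (h (lineMap y x t) + fderiv ℝ (fun z ↦ h (lineMap y z t)) x (x - y)) t := by
    intro t ht
    have hh_lineMap : HasFDerivAt h (fderiv ℝ h (lineMap y x t)) (lineMap y x t) :=
      ((hh _ (lineMap_mem_segment ℝ y x (by rwa [uIcc_of_le zero_le_one] at ht))).differentiableAt
        one_ne_zero).hasFDerivAt
    rw [fderiv_comp_lineMap]
    simpa [add_comm] using
      (hasDerivAt_id t).fun_smul (hh_lineMap.comp_hasDerivAt t AffineMap.hasDerivAt_lineMap)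
  have hfderiv : fderiv ℝ (segmentAverage h y) x =
      ∫ t in (0 : ℝ)..1, fderiv ℝ (fun z ↦ h (lineMap y z t)) x :=
    (hasFDerivAt_intervalIntegral hf).fderiv
  rw [hfderiv, ContinuousLinearMap.intervalIntegral_apply hcont'.intervalIntegrable,
    segmentAverage, ← intervalIntegral.integral_add hcont.intervalIntegrable
      hcont'_apply.intervalIntegrable, intervalIntegral.integral_eq_sub_of_hasDerivAt hderiv
      (hcont.add hcont'_apply).intervalIntegrable]
  simp

end SegmentAverage

section GLoc

variable {E F : Type*} [NormedAddCommGroup E] [InnerProductSpace ℝ E]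
  [NormedAddCommGroup F] [NormedSpace ℝ F] {h : E → F} {x y : E}

/-- The paper's `g_loc` with base point `y = y₁`, as a function of `x`; the Newton kernel
`r₂ ^ (2 - d)` in the line integral is replaced by an arbitrary function `h`, so that `gLoc h y`
is the candidate solution of `Δ g = r₁ ^ (2 - d) h`. -/
noncomputable def gLoc (h : E → F) (y x : E) : F :=
  (‖x - y‖ ^ (4 - finrank ℝ E : ℝ) / (2 * (4 - finrank ℝ E : ℝ))) • segmentAverage h y x

lemma contDiffAt_gLoc (hx : x ≠ y) (hh : ∀ z ∈ [y -[ℝ] x], ContDiffAt ℝ 2 h z) :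
    ContDiffAt ℝ 2 (gLoc h y) x :=
  ((contDiffAt_norm_sub_rpow _ hx).div_const _).smul (contDiffAt_segmentAverage hh)

variable [FiniteDimensional ℝ E] [CompleteSpace F]

lemma laplacian_segmentAverage_eq_zero (hh : HarmonicOnNhd h [y -[ℝ] x]) :
    Δ (segmentAverage h y) x = 0 := by
  have hzero : ∀ t ∈ [[(0 : ℝ), 1]], Δ (fun z ↦ h (lineMap y z t)) x = 0 := fun t ht ↦ by
    rw [uIcc_of_le zero_le_one] at ht
    rw [laplacian_comp_lineMap, (hh _ (lineMap_mem_segment ℝ y x ht)).2.self_of_nhds, Pi.zero_apply,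
      smul_zero]
  calc Δ (segmentAverage h y) x
      = ∫ t in (0 : ℝ)..1, Δ (fun z ↦ h (lineMap y z t)) x :=
        laplacian_intervalIntegral (contDiffAt_uncurry_comp_lineMap fun z hz ↦ (hh z hz).1)
    _ = ∫ t in (0 : ℝ)..1, 0 := intervalIntegral.integral_congr hzero
    _ = 0 := intervalIntegral.integral_zero

theorem laplacian_g_loc_general (hdim : finrank ℝ E ≠ 4) (hx : x ≠ y)
    (hh : HarmonicOnNhd h [y -[ℝ] x]) :
    Δ (gLoc h y) x = ‖x - y‖ ^ (2 - finrank ℝ E : ℝ) • h x := by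
  have h2 : ∀ z ∈ [y -[ℝ] x], ContDiffAt ℝ 2 h z := fun z hz ↦ (hh z hz).1
  set p : ℝ := 4 - finrank ℝ E with hp_def
  have hp : p ≠ 0 := sub_ne_zero.2 (by exact_mod_cast hdim.symm)
  set A := segmentAverage h y
  have hg : gLoc h y = (2 * p)⁻¹ • fun z ↦ ‖z - y‖ ^ p • A z := by
    ext z
    simp only [gLoc, Pi.smul_apply, smul_smul, p, A, div_eq_inv_mul]
  have hnorm : ContDiffAt ℝ 2 (fun z ↦ ‖z - y‖ ^ p) x := contDiffAt_norm_sub_rpow p hx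
  have hA : ContDiffAt ℝ 2 A x := contDiffAt_segmentAverage h2
  calc Δ (gLoc h y) x
      = (2 * p)⁻¹ • (‖x - y‖ ^ p • Δ A x + 2 • fderiv ℝ A x ((p * ‖x - y‖ ^ (p - 2)) • (x - y))
          + (p * (p + finrank ℝ E - 2) * ‖x - y‖ ^ (p - 2)) • A x) := by
        rw [hg, laplacian_smul _ (hnorm.fun_smul hA), laplacian_fun_smul hnorm hA,
          gradient_norm_sub_rpow p hx, laplacian_norm_sub_rpow p hx]
    _ = ‖x - y‖ ^ (p - 2) • (A x + fderiv ℝ A x (x - y)) := by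
        rw [laplacian_segmentAverage_eq_zero hh, map_smul,
          show p + finrank ℝ E - 2 = 2 by rw [hp_def]; ring]
        match_scalars <;> field_simp
    _ = ‖x - y‖ ^ (2 - finrank ℝ E : ℝ) • h x := by
        rw [segmentAverage_add_fderiv fun z hz ↦ (h2 z hz).of_le one_le_two,
          show p - 2 = 2 - finrank ℝ E by rw [hp_def]; ring]

end GLoc

/-- The line-integral ("local") particular solution
`g_loc(x) = (r₁^{4-d}/(2(4-d))) ∫₀¹ ‖(y₁-y₂) + λ(x-y₁)‖^{2-d} dλ` solves the elementary
Poisson equation `Δ g_loc = r₁^{2-d} r₂^{2-d}` pointwise on its regularity domain. -/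
theorem laplacian_g_loc (d : ℕ) (hd3 : 3 ≤ d) (hd4 : d ≠ 4)
    (y₁ y₂ : EuclideanSpace ℝ (Fin d)) (hy : y₁ ≠ y₂) :
    ∀ x : EuclideanSpace ℝ (Fin d), x ≠ y₁ →
      (∀ l : ℝ, l ∈ Icc (0 : ℝ) 1 → (y₁ - y₂) + l • (x - y₁) ≠ 0) →
      laplacian
        (fun z => ‖z - y₁‖ ^ ((4 : ℝ) - (d : ℝ)) / (2 * ((4 : ℝ) - (d : ℝ))) *
          ∫ l in (0 : ℝ)..1, ‖(y₁ - y₂) + l • (z - y₁)‖ ^ ((2 : ℝ) - (d : ℝ))) x =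
        ‖x - y₁‖ ^ ((2 : ℝ) - (d : ℝ)) * ‖x - y₂‖ ^ ((2 : ℝ) - (d : ℝ)) := by
  intro x hx hseg
  have hline (z : EuclideanSpace ℝ (Fin d)) (l : ℝ) :
      lineMap y₁ z l - y₂ = (y₁ - y₂) + l • (z - y₁) := by
    rw [lineMap_apply_module']
    abel
  have hh : HarmonicOnNhd (fun z ↦ ‖z - y₂‖ ^ ((2 : ℝ) - d)) [y₁ -[ℝ] x] := by
    rw [segment_eq_image_lineMap]
    rintro _ ⟨l, hl, rfl⟩
    have hne : lineMap y₁ x l ≠ y₂ := sub_ne_zero.1 (hline x l ▸ hseg l hl)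
    simpa using harmonicAt_norm_sub_rpow_two_sub_finrank hne
  have hg : (fun z ↦ ‖z - y₁‖ ^ ((4 : ℝ) - d) / (2 * ((4 : ℝ) - d)) *
      ∫ l in (0 : ℝ)..1, ‖(y₁ - y₂) + l • (z - y₁)‖ ^ ((2 : ℝ) - d)) =
        gLoc (fun z ↦ ‖z - y₂‖ ^ ((2 : ℝ) - d)) y₁ := by
    ext z
    simp only [gLoc, segmentAverage, hline, finrank_euclideanSpace_fin, smul_eq_mul]
  rw [hg, laplacian_eq_innerProductSpace_laplacian (contDiffAt_gLoc hx fun z hz ↦ (hh z hz).1),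
    laplacian_g_loc_general (by simpa using hd4) hx hh, finrank_euclideanSpace_fin, smul_eq_mul]
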